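/- arXiv:1611.02929 — 7 statements merged into one kernel-verified Lean document; each statement's English description precedes it below -/
import Mathlib

section
/- Let f be a partition of K trees among P processes that is induced by some forest mesh with an SFC partition. Then f is induced by a forest mesh with an SFC partition if and only if it satisfies the following three properties: (i) each nonempty f(p) is a set of consecutive integers, i.e. f(p) = {k_p, k_p+1, …, K_p}; (ii) for all p < q with f(p) ≠ ∅ ≠ f(q), K_p ≤ k_q; (iii) for all p ≠ q, f(p) ∩ f(q) ⊆ {k_p, K_p}. (Stated as an equivalence: a partition f is induced by some forest mesh with an SFC partition if and only if properties (i), (ii), (iii) hold.) -/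
/-!
Property (ii) carries all the content. Written elementwise it says that the relation
tree `k` belongs to process `p` is order-compatible: a tree of a smaller process is at most
every tree of a larger process (`OrderCompatible`).

* An SFC partition induces an order-compatible `f`, because a leaf in a strictly larger tree
  cannot go to a strictly smaller process (`InducedBySFC.orderCompatible`).
* Conversely, if `f` is order-compatible, give each tree one leaf per process owning it and
  send these leaves to the owners in increasing order
  (`inducedBySFC_of_orderCompatible`).
* Properties (i) and (iii) follow from order-compatibility. For (i), a tree missing strictly
  between two trees of `p` would have an owner `q ≠ p`, and `q` is excluded on either side of
  `p`. For (iii), a tree shared by `p < q` is both the last tree of `p` and the first of `q`.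
-/

open Classical

/-- A partition of the `K` trees `{0, …, K-1}` among the `P` processes `{0, …, P-1}`:
each process `p` gets a finite set `f p ⊆ {0, …, K-1}` of trees, the union of all
the `f p` is `{0, …, K-1}`, and non-processes (`p ≥ P`) carry no trees. -/
def IsPartition (K P : ℕ) (f : ℕ → Finset ℕ) : Prop :=
  (∀ p, f p ⊆ Finset.range K) ∧
  (∀ p, P ≤ p → f p = ∅) ∧
  (Finset.range P).biUnion f = Finset.range K

/-- A valid partition: a partition such that (i) each nonempty `f p` is a consecutive
range `{k_p, …, K_p}`, (ii) for `p < q` (both nonempty) `K_p ≤ k_q`, and (iii) for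
`p ≠ q` the overlap `f p ∩ f q` is contained in `{k_p, K_p}`. -/
def IsValid (K P : ℕ) (f : ℕ → Finset ℕ) : Prop :=
  IsPartition K P f ∧
  (∀ p (h : (f p).Nonempty), f p = Finset.Icc ((f p).min' h) ((f p).max' h)) ∧
  (∀ p q, p < q → ∀ (hp : (f p).Nonempty) (hq : (f q).Nonempty),
      (f p).max' hp ≤ (f q).min' hq) ∧
  (∀ p q, p ≠ q → ∀ (hp : (f p).Nonempty),
      f p ∩ f q ⊆ {(f p).min' hp, (f p).max' hp})

/-- The extended first tree index `k_p` (an integer): `min (f p)` if `f p` is nonempty;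
otherwise `K_q + 1` for the maximal `q < p` with `f q` nonempty, or `0` if there is no
such `q`. -/
noncomputable def kExt (f : ℕ → Finset ℕ) (p : ℕ) : ℤ :=
  if h : (f p).Nonempty then ((f p).min' h : ℤ)
  else if hQ : ((Finset.range p).filter fun q => (f q).Nonempty).Nonempty then
    have hq : (f (((Finset.range p).filter fun q => (f q).Nonempty).max' hQ)).Nonempty :=
      (Finset.mem_filter.mp (Finset.max'_mem _ hQ)).2
    ((f (((Finset.range p).filter fun q => (f q).Nonempty).max' hQ)).max' hq : ℤ) + 1
  else 0

/-- The extended last tree index `K_p` (an integer): `max (f p)` if `f p` is nonempty;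
otherwise `K_q` for the maximal `q < p` with `f q` nonempty, or `-1` if there is no
such `q`. -/
noncomputable def KExt (f : ℕ → Finset ℕ) (p : ℕ) : ℤ :=
  if h : (f p).Nonempty then ((f p).max' h : ℤ)
  else if hQ : ((Finset.range p).filter fun q => (f q).Nonempty).Nonempty then
    have hq : (f (((Finset.range p).filter fun q => (f q).Nonempty).max' hQ)).Nonempty :=
      (Finset.mem_filter.mp (Finset.max'_mem _ hQ)).2
    ((f (((Finset.range p).filter fun q => (f q).Nonempty).max' hQ)).max' hq : ℤ)
  else -1

/-- The offset array `O` of a (valid) partition `f`, of length `P + 1`: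
`O[P] = K`, and for `p < P`, `O[p] = k_p` if `f p = ∅` or the first local tree `k_p`
of `p` is not a local tree of any smaller rank, and `O[p] = -k_p - 1` otherwise. -/
noncomputable def offset (K P : ℕ) (f : ℕ → Finset ℕ) (p : ℕ) : ℤ :=
  if p = P then (K : ℤ)
  else if ∀ (h : (f p).Nonempty), ∀ r < p, (f p).min' h ∉ f r then kExt f p
  else -(kExt f p) - 1

/-- The sending paradigm: given the old partition `f`, the process that sends tree `k`
to process `q` is `q` itself if `k` is already a local tree of `q`, and otherwise
the minimal process `p` with `k ∈ f p`. -/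
noncomputable def sender (f : ℕ → Finset ℕ) (q k : ℕ) : ℕ :=
  if k ∈ f q then q else sInf {p | k ∈ f p}

/-- `S_p`: the set of processes `q` such that `p` is the sender of some tree
`k ∈ f' q` (where `f` is the old and `f'` the new partition). -/
def SendSet (f f' : ℕ → Finset ℕ) (p : ℕ) : Set ℕ :=
  {q | ∃ k ∈ f' q, sender f q k = p}

/-- `R_p`: the set of processes `q` such that `q` is the sender of some tree
`k ∈ f' p` (where `f` is the old and `f'` the new partition). -/
def RecvSet (f f' : ℕ → Finset ℕ) (p : ℕ) : Set ℕ :=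
  {q | ∃ k ∈ f' p, sender f p k = q}

/-- A partition `f` is induced by a forest mesh with an SFC partition: there are leaf
counts `N k ≥ 1` for each tree `k < K` and a map `π` from leaves `(k, I)`, `I < N k`,
to processes `< P` that is monotone with respect to the lexicographic order on leaves,
such that `f p` consists exactly of the trees having a leaf mapped to `p`. -/
def InducedBySFC (K P : ℕ) (f : ℕ → Finset ℕ) : Prop :=
  ∃ (N : ℕ → ℕ) (π : ℕ × ℕ → ℕ),
    (∀ k < K, 0 < N k) ∧
    (∀ k < K, ∀ I < N k, π (k, I) < P) ∧
    (∀ k k' I J, k < K → k' < K → I < N k → J < N k' →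
        (k < k' ∨ (k = k' ∧ I < J)) → π (k, I) ≤ π (k', J)) ∧
    (∀ p, f p = (Finset.range K).filter fun k => ∃ I < N k, π (k, I) = p)

/-- Elementwise form of property (ii): trees of a smaller process never exceed trees of a
larger one. -/
def OrderCompatible (f : ℕ → Finset ℕ) : Prop :=
  ∀ p q, p < q → ∀ k ∈ f p, ∀ k' ∈ f q, k ≤ k'

theorem orderCompatible_iff (f : ℕ → Finset ℕ) :
    OrderCompatible f ↔
      ∀ p q, p < q → ∀ (hp : (f p).Nonempty) (hq : (f q).Nonempty),
        (f p).max' hp ≤ (f q).min' hq := by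
  constructor
  · intro h p q hpq hp hq
    exact h p q hpq _ (Finset.max'_mem _ hp) _ (Finset.min'_mem _ hq)
  · intro h p q hpq k hk k' hk'
    exact ((f p).le_max' k hk).trans
      ((h p q hpq ⟨k, hk⟩ ⟨k', hk'⟩).trans ((f q).min'_le k' hk'))

theorem InducedBySFC.orderCompatible {K P : ℕ} {f : ℕ → Finset ℕ}
    (h : InducedBySFC K P f) : OrderCompatible f := by
  obtain ⟨N, π, -, -, hmono, hf⟩ := h
  intro p q hpq k hk k' hk'
  rw [hf, Finset.mem_filter, Finset.mem_range] at hk hk'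
  obtain ⟨hkK, I, hI, rfl⟩ := hk
  obtain ⟨hkK', J, hJ, rfl⟩ := hk'
  by_contra! hlt
  exact absurd (hmono k' k J I hkK' hkK hJ hI (Or.inl hlt)) hpq.not_ge

theorem IsPartition.exists_owner {K P : ℕ} {f : ℕ → Finset ℕ} (hf : IsPartition K P f)
    {k : ℕ} (hk : k < K) : ∃ p, k ∈ f p := by
  have : k ∈ (Finset.range P).biUnion f := by rw [hf.2.2]; exact Finset.mem_range.2 hk
  obtain ⟨p, -, hp⟩ := Finset.mem_biUnion.1 this
  exact ⟨p, hp⟩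

theorem IsPartition.lt_of_mem {K P : ℕ} {f : ℕ → Finset ℕ} (hf : IsPartition K P f)
    {p k : ℕ} (hk : k ∈ f p) : p < P := by
  by_contra! hp
  simp [hf.2.1 p hp] at hk

theorem IsPartition.finite_owners {K P : ℕ} {f : ℕ → Finset ℕ} (hf : IsPartition K P f)
    (k : ℕ) : {p | k ∈ f p}.Finite :=
  (Set.finite_lt_nat P).subset fun _ hp => hf.lt_of_mem hp

/-- The mesh is explicit: tree `k` has as many leaves as owners, and its `I`-th leaf goes to
its `I`-th owner in increasing order. -/
theorem inducedBySFC_of_orderCompatible {K P : ℕ} {f : ℕ → Finset ℕ}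
    (hf : IsPartition K P f) (h : OrderCompatible f) : InducedBySFC K P f := by
  have hmem : ∀ k I, I < (hf.finite_owners k).toFinset.card →
      k ∈ f (Nat.nth (fun p => k ∈ f p) I) := fun k I hI =>
    Nat.nth_mem_of_lt_card (p := fun p => k ∈ f p) (hf.finite_owners k) hI
  refine ⟨fun k => (hf.finite_owners k).toFinset.card,
    fun x => Nat.nth (fun p => x.1 ∈ f p) x.2, ?_, ?_, ?_, ?_⟩
  · intro k hk
    obtain ⟨p, hp⟩ := hf.exists_owner hk
    exact Finset.card_pos.2 ⟨p, (hf.finite_owners k).mem_toFinset.2 hp⟩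
  · intro k _ I hI
    exact hf.lt_of_mem (hmem k I hI)
  · rintro k k' I J - - hI hJ (hlt | ⟨rfl, hIJ⟩)
    · by_contra! hgt
      exact absurd (h _ _ hgt _ (hmem k' J hJ) _ (hmem k I hI)) hlt.not_ge
    · exact (Nat.nth_lt_nth_of_lt_card (hf.finite_owners k) hIJ hJ).le
  · intro p
    ext k
    rw [Finset.mem_filter]
    constructor
    · intro hk
      exact ⟨hf.1 p hk,
        Nat.exists_lt_card_finite_nth_eq (p := fun p => k ∈ f p) (hf.finite_owners k) hk⟩
    · rintro ⟨-, I, hI, rfl⟩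
      exact hmem k I hI

theorem OrderCompatible.eq_Icc {K P : ℕ} {f : ℕ → Finset ℕ} (h : OrderCompatible f)
    (hf : IsPartition K P f) (p : ℕ) (hp : (f p).Nonempty) :
    f p = Finset.Icc ((f p).min' hp) ((f p).max' hp) := by
  ext k
  rw [Finset.mem_Icc]
  refine ⟨fun hk => ⟨(f p).min'_le k hk, (f p).le_max' k hk⟩, fun ⟨hmin, hmax⟩ => ?_⟩
  have hminmem := (f p).min'_mem hp
  have hmaxmem := (f p).max'_mem hp
  have hkK : k < K := hmax.trans_lt (Finset.mem_range.1 (hf.1 p hmaxmem))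
  obtain ⟨q, hq⟩ := hf.exists_owner hkK
  -- If `q ≠ p` owns `k`, order-compatibility forces `k` to be an endpoint of `f p`.
  rcases lt_trichotomy q p with hqp | rfl | hpq
  · rwa [(h q p hqp k hq _ hminmem).antisymm hmin]
  · exact hq
  · rwa [hmax.antisymm (h p q hpq _ hmaxmem k hq)]

theorem OrderCompatible.inter_subset {f : ℕ → Finset ℕ} (h : OrderCompatible f)
    (p q : ℕ) (hpq : p ≠ q) (hp : (f p).Nonempty) :
    f p ∩ f q ⊆ {(f p).min' hp, (f p).max' hp} := by
  intro k hk
  obtain ⟨hkp, hkq⟩ := Finset.mem_inter.1 hk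
  rw [Finset.mem_insert, Finset.mem_singleton]
  rcases hpq.lt_or_gt with hlt | hgt
  · exact Or.inr (((f p).le_max' k hkp).antisymm (h p q hlt _ ((f p).max'_mem hp) k hkq))
  · exact Or.inl ((h q p hgt k hkq _ ((f p).min'_mem hp)).antisymm ((f p).min'_le k hkp))

/-- Proposition: characterization of valid partitions.
A partition `f` of `K ≥ 1` trees among `P ≥ 1` processes is induced by some forest mesh
with an SFC partition if and only if it satisfies:
(i) each nonempty `f p` is a consecutive range `{k_p, …, K_p}`;
(ii) for `p < q` with `f p` and `f q` nonempty, `K_p ≤ k_q`;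
(iii) for `p ≠ q`, `f p ∩ f q ⊆ {k_p, K_p}`. -/
theorem valid_iff_induced_by_SFC (K P : ℕ) (hK : 1 ≤ K) (hP : 1 ≤ P)
    (f : ℕ → Finset ℕ) (hf : IsPartition K P f) :
    InducedBySFC K P f ↔
      ((∀ p (h : (f p).Nonempty), f p = Finset.Icc ((f p).min' h) ((f p).max' h)) ∧
       (∀ p q, p < q → ∀ (hp : (f p).Nonempty) (hq : (f q).Nonempty),
          (f p).max' hp ≤ (f q).min' hq) ∧
       (∀ p q, p ≠ q → ∀ (hp : (f p).Nonempty),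
          f p ∩ f q ⊆ {(f p).min' hp, (f p).max' hp})) := by
  constructor
  · intro h
    have hc := h.orderCompatible
    exact ⟨hc.eq_Icc hf, (orderCompatible_iff f).1 hc, hc.inter_subset⟩
  · rintro ⟨-, h, -⟩
    exact inducedBySFC_of_orderCompatible hf ((orderCompatible_iff f).2 h)
end

section
/- If in a valid partition f the tree k is shared between processes p and q with p < q (i.e. k ∈ f(p) ∩ f(q)), then for every process r with p < r < q one has f(r) = {k} or f(r) = ∅. -/
open Classical

/-- Corollary.
If in a valid partition `f` the tree `k` is shared between processes `p < q`,
then every process `r` with `p < r < q` has `f r = {k}` or `f r = ∅`. -/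
theorem between_sharers (K P : ℕ) (hK : 1 ≤ K) (hP : 1 ≤ P)
    (f : ℕ → Finset ℕ) (hf : IsValid K P f)
    (p q k : ℕ) (hp : p < P) (hq : q < P) (hpq : p < q)
    (hk : k ∈ f p ∩ f q) :
    ∀ r, p < r → r < q → f r = {k} ∨ f r = ∅ := by
  intro r hpr hrq
  obtain ⟨-, -, hle, -⟩ := hf
  obtain ⟨hkp, hkq⟩ := Finset.mem_inter.mp hk
  obtain he | hr := (f r).eq_empty_or_nonempty
  · exact Or.inr he
  -- Condition (ii) for `p < r` and for `r < q` gives `k ≤ K_p ≤ k_r ≤ K_r ≤ k_q ≤ k`.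
  have hlo : k ≤ (f r).min' hr := ((f p).le_max' k hkp).trans (hle p r hpr ⟨k, hkp⟩ hr)
  have hhi : (f r).max' hr ≤ k := (hle r q hrq hr ⟨k, hkq⟩).trans ((f q).min'_le k hkq)
  refine Or.inl (Finset.eq_singleton_iff_nonempty_unique_mem.mpr ⟨hr, fun x hx => ?_⟩)
  exact le_antisymm (((f r).le_max' x hx).trans hhi) (hlo.trans ((f r).min'_le x hx))
end

section
/- Let f be a valid partition with offset array O. Then for every process p: k_p = O[p] if O[p] ≥ 0, and k_p = |O[p] + 1| if O[p] < 0; moreover K_p = |O[p+1]| − 1. Here k_p and K_p are the (extended) first and last tree indices of process p. -/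
/-!
The integer `KExt f p` is determined by the sets `f 0, …, f p` alone: it is at least `-1`, and the
trees held by the processes `q ≤ p` are exactly those with index at most `KExt f p`
(`exists_mem_iff_le_KExt`). Indeed the last nonempty process up to `p` holds the largest such tree,
because the ranges are ordered, and every smaller tree is held by somebody, necessarily not by a
later process.

Given this, compare `KExt f p` with the entry at `p + 1`. If `f (p + 1)` is empty, nothing is added
to the union and the entry is `KExt f p + 1`. If it is nonempty with first tree `m`, then all trees
below `m` belong to processes up to `p`, and no tree above `m` does. So `KExt f p` is `m` when `m`
is shared with an earlier process (entry `-m - 1`) and `m - 1` otherwise (entry `m`). If `p + 1 = P`,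
the union is everything and the entry is `K`.
-/

open Classical

theorem kExt_eq_of_empty (f : ℕ → Finset ℕ) (p : ℕ) (h : f p = ∅) :
    kExt f p = KExt f p + 1 := by
  unfold kExt KExt
  have h' : ¬ (f p).Nonempty := by simp [h]
  rw [dif_neg h', dif_neg h']
  split_ifs <;> simp

/-- `KExt f p` is the last tree of the last nonempty process up to and including `p`, or `-1` if
there is none; this treats uniformly the cases `f p` empty and nonempty. -/
theorem KExt_spec (f : ℕ → Finset ℕ) (p : ℕ) :
    ((∀ q ≤ p, f q = ∅) ∧ KExt f p = -1) ∨
    ∃ q, q ≤ p ∧ (∃ h : (f q).Nonempty, KExt f p = ((f q).max' h : ℤ)) ∧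
      ∀ r, q < r → r ≤ p → f r = ∅ := by
  by_cases h : (f p).Nonempty
  · exact Or.inr ⟨p, le_rfl, ⟨h, by rw [KExt, dif_pos h]⟩, fun r h1 h2 => by omega⟩
  · have hp : f p = ∅ := Finset.not_nonempty_iff_eq_empty.mp h
    by_cases hQ : ((Finset.range p).filter fun q => (f q).Nonempty).Nonempty
    · have hm := Finset.mem_filter.mp (Finset.max'_mem _ hQ)
      refine Or.inr ⟨_, (Finset.mem_range.mp hm.1).le, ⟨hm.2, ?_⟩, fun r h1 h2 => ?_⟩
      · rw [KExt, dif_neg h, dif_pos hQ]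
      · by_contra hr
        have hne := Finset.nonempty_iff_ne_empty.mpr hr
        have hrp : r ≠ p := by rintro rfl; exact h hne
        have hmem : r ∈ (Finset.range p).filter fun q => (f q).Nonempty :=
          Finset.mem_filter.mpr ⟨Finset.mem_range.mpr (by omega), hne⟩
        have := Finset.le_max' _ r hmem
        omega
    · refine Or.inl ⟨fun q hq => ?_, by rw [KExt, dif_neg h, dif_neg hQ]⟩
      by_contra hr
      have hne := Finset.nonempty_iff_ne_empty.mpr hr
      have hrp : q ≠ p := by rintro rfl; exact h hne
      exact hQ ⟨q, Finset.mem_filter.mpr ⟨Finset.mem_range.mpr (by omega), hne⟩⟩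

theorem neg_one_le_KExt (f : ℕ → Finset ℕ) (p : ℕ) : -1 ≤ KExt f p := by
  rcases KExt_spec f p with ⟨_, h⟩ | ⟨q, _, ⟨_, h⟩, _⟩ <;> omega

theorem kExt_nonneg (f : ℕ → Finset ℕ) (p : ℕ) : 0 ≤ kExt f p := by
  by_cases h : (f p).Nonempty
  · rw [kExt, dif_pos h]; omega
  · have := kExt_eq_of_empty f p (Finset.not_nonempty_iff_eq_empty.mp h)
    have := neg_one_le_KExt f p
    omega

theorem IsValid.lt_K {K P : ℕ} {f : ℕ → Finset ℕ} (hf : IsValid K P f) {p k : ℕ}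
    (h : k ∈ f p) : k < K :=
  Finset.mem_range.mp (hf.1.1 p h)

theorem IsValid.exists_mem {K P : ℕ} {f : ℕ → Finset ℕ} (hf : IsValid K P f) {k : ℕ}
    (h : k < K) : ∃ r < P, k ∈ f r := by
  have := Finset.mem_range.mpr h
  rw [← hf.1.2.2] at this
  simpa using this

/-- Trees of an earlier process never exceed trees of a later one. -/
theorem IsValid.mono {K P : ℕ} {f : ℕ → Finset ℕ} (hf : IsValid K P f) {p q a b : ℕ}
    (hpq : p < q) (ha : a ∈ f p) (hb : b ∈ f q) : a ≤ b :=
  (Finset.le_max' _ a ha).trans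
    ((hf.2.2.1 p q hpq ⟨a, ha⟩ ⟨b, hb⟩).trans (Finset.min'_le _ b hb))

/-- The trees held by the processes up to `p` are exactly `0, …, KExt f p`. -/
theorem IsValid.exists_mem_iff_le_KExt {K P : ℕ} {f : ℕ → Finset ℕ} (hf : IsValid K P f)
    (p k : ℕ) : (∃ q ≤ p, k ∈ f q) ↔ (k : ℤ) ≤ KExt f p := by
  rcases KExt_spec f p with ⟨he, hk⟩ | ⟨q, hq, ⟨hne, hk⟩, hlast⟩
  · rw [hk]
    constructor
    · rintro ⟨q, hq, hm⟩
      simp [he q hq] at hm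
    · intro h; omega
  · rw [hk, Nat.cast_le]
    have hmax := Finset.max'_mem _ hne
    constructor
    · rintro ⟨r, hr, hm⟩
      rcases lt_trichotomy r q with h | rfl | h
      · exact hf.mono h hm hmax
      · exact Finset.le_max' _ _ hm
      · simp [hlast r h hr] at hm
    · intro h
      obtain ⟨r, -, hm⟩ := hf.exists_mem (h.trans_lt (hf.lt_K hmax))
      by_cases hr : r ≤ p
      · exact ⟨r, hr, hm⟩
      · -- A later holder forces `k` to be the maximum, which process `q` holds as well.
        have := hf.mono (by omega : q < r) hmax hm
        exact ⟨q, hq, by rwa [le_antisymm h this]⟩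

/-- An empty process does not change the last index. -/
theorem IsValid.KExt_succ_of_empty {K P : ℕ} {f : ℕ → Finset ℕ} (hf : IsValid K P f) (p : ℕ)
    (h : f (p + 1) = ∅) : KExt f (p + 1) = KExt f p := by
  have key : ∀ k : ℕ, (k : ℤ) ≤ KExt f (p + 1) ↔ (k : ℤ) ≤ KExt f p := by
    intro k
    rw [← hf.exists_mem_iff_le_KExt, ← hf.exists_mem_iff_le_KExt]
    constructor
    · rintro ⟨q, hq, hm⟩
      have : q ≠ p + 1 := by rintro rfl; simp [h] at hm
      exact ⟨q, by omega, hm⟩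
    · rintro ⟨q, hq, hm⟩
      exact ⟨q, by omega, hm⟩
  have h1 := neg_one_le_KExt f p
  have h2 := neg_one_le_KExt f (p + 1)
  have h3 := key (KExt f p).toNat
  have h4 := key (KExt f (p + 1)).toNat
  omega

/-- The formula for `K_p`: three cases for the entry at `p + 1`, namely the end of the array, an
unshared (or absent) first tree, and a first tree shared with an earlier process. -/
theorem IsValid.KExt_eq_abs {K P : ℕ} {f : ℕ → Finset ℕ} (hf : IsValid K P f) (hK : 1 ≤ K)
    (p : ℕ) : KExt f p = |offset K P f (p + 1)| - 1 := by
  have hL := hf.exists_mem_iff_le_KExt p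
  have hlow := neg_one_le_KExt f p
  -- The tree `KExt f p`, when it exists, is itself held by some process up to `p`.
  have htop : 0 ≤ KExt f p → ∃ q ≤ p, (KExt f p).toNat ∈ f q := fun h =>
    (hL _).mpr (by omega)
  unfold offset
  split_ifs with hP hc
  · rw [abs_of_nonneg (by omega)]
    obtain ⟨r, hr, hm⟩ := hf.exists_mem (by omega : K - 1 < K)
    have h1 := (hL (K - 1)).mp ⟨r, by omega, hm⟩
    obtain ⟨q, -, hq⟩ := htop (by omega)
    have := hf.lt_K hq
    omega
  · rw [abs_of_nonneg (kExt_nonneg f _)]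
    by_cases h : (f (p + 1)).Nonempty
    · have hmin := Finset.min'_mem _ h
      have hc' := hc h
      rw [kExt, dif_pos h]
      have hleast : ∀ x ∈ f (p + 1), (f (p + 1)).min' h ≤ x := fun x hx => Finset.min'_le _ x hx
      generalize (f (p + 1)).min' h = m at *
      have h1 : ¬ (m : ℤ) ≤ KExt f p := fun hle => by
        obtain ⟨q, hq, hm⟩ := (hL m).mpr hle
        exact hc' q (by omega) hm
      rcases Nat.eq_zero_or_pos m with h0 | h0
      · omega
      · have hmK := hf.lt_K hmin
        obtain ⟨r, -, hm⟩ := hf.exists_mem (by omega : m - 1 < K)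
        have hr : r ≤ p := by
          by_contra hr
          rcases (by omega : r = p + 1 ∨ p + 1 < r) with rfl | hlt
          · have := hleast _ hm
            omega
          · have := hf.mono hlt hmin hm
            omega
        have := (hL (m - 1)).mp ⟨r, hr, hm⟩
        omega
    · have he := Finset.not_nonempty_iff_eq_empty.mp h
      rw [kExt_eq_of_empty f _ he, hf.KExt_succ_of_empty p he]
      omega
  · push Not at hc
    obtain ⟨h, r, hr, hm⟩ := hc
    have h0 := kExt_nonneg f (p + 1)
    rw [abs_of_neg (by omega), kExt, dif_pos h]
    have hmin := Finset.min'_mem _ h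
    generalize (f (p + 1)).min' h = m at *
    have h1 := (hL m).mp ⟨r, by omega, hm⟩
    obtain ⟨q, hq, hqm⟩ := htop (by omega)
    have := hf.mono (by omega : q < p + 1) hqm hmin
    omega

/-- Lemma: recovering the partition range from the offset array.
For a valid partition `f` with offset array `O` and every process `p < P`:
`k_p = O[p]` if `O[p] ≥ 0`, `k_p = |O[p] + 1|` if `O[p] < 0`, and
`K_p = |O[p+1]| - 1` (extended indices). -/
theorem range_from_offset (K P : ℕ) (hK : 1 ≤ K) (hP : 1 ≤ P)
    (f : ℕ → Finset ℕ) (hf : IsValid K P f) (p : ℕ) (hp : p < P) :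
    (0 ≤ offset K P f p → kExt f p = offset K P f p) ∧
    (offset K P f p < 0 → kExt f p = |offset K P f p + 1|) ∧
    KExt f p = |offset K P f (p + 1)| - 1 := by
  have h0 := kExt_nonneg f p
  have hO : offset K P f p = kExt f p ∨ offset K P f p = -(kExt f p) - 1 := by
    unfold offset
    rw [if_neg hp.ne]
    split_ifs <;> simp
  refine ⟨fun h => ?_, fun h => ?_, hf.KExt_eq_abs hK p⟩
  · omega
  · rw [abs_of_nonpos (by omega)]
    omega
end

section
/- Characterization of the first receiving partner: let f (old) and f' (new) be valid partitions of the same K trees among the same P processes, let p be a process with f'(p) ≠ ∅, and let k'_p = min f'(p). Then R_p is nonempty and min R_p = p if k'_p ∈ f(p), while min R_p = min{ q | k'_p ∈ f(q) } otherwise. In words: the smallest rank p receives trees from is the smallest rank that had p's new first tree as a local tree in the old partition, or p itself if this tree was already local on p. -/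
/-!
In a valid partition the ranks are ordered like their trees: if `k < l`, `k ∈ f a` and `l ∈ f b`,
then `a ≤ b` (`rank_le_of_tree_lt`), since `b < a` would give `l ≤ K_b ≤ k_a ≤ k`. The sender of
a tree always owns that tree in the old partition (`mem_sender`). Hence the sender of the smallest
new tree of `p` is at most the sender of any other new tree of `p`, and so it is the minimum
of `R_p`.
-/

open Classical

lemma rank_le_of_tree_lt {K P : ℕ} {f : ℕ → Finset ℕ} (hf : IsValid K P f) {a b k l : ℕ}
    (hk : k ∈ f a) (hl : l ∈ f b) (hkl : k < l) : a ≤ b := by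
  by_contra! hba
  have h := hf.2.2.1 b a hba ⟨l, hl⟩ ⟨k, hk⟩
  have h1 := (f b).le_max' l hl
  have h2 := (f a).min'_le k hk
  omega

lemma mem_sender {K P : ℕ} {f : ℕ → Finset ℕ} (hf : IsPartition K P f) (p : ℕ) {k : ℕ}
    (hk : k < K) : k ∈ f (sender f p k) := by
  unfold sender
  split_ifs with h
  · exact h
  · have hmem : k ∈ (Finset.range P).biUnion f := hf.2.2 ▸ Finset.mem_range.mpr hk
    obtain ⟨q, -, hq⟩ := Finset.mem_biUnion.mp hmem
    exact Nat.sInf_mem (s := {q | k ∈ f q}) ⟨q, hq⟩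

/-- characterization of the first receiving partner `r_first`.
Let `f` (old) and `f'` (new) be valid partitions, and let `p` be a process with
`f' p ≠ ∅` and new first tree `k'_p = min (f' p)`. Then `R_p` is nonempty, and
`min R_p = p` if `k'_p ∈ f p`, while `min R_p = min {q | k'_p ∈ f q}` otherwise. -/
theorem first_receive_partner (K P : ℕ) (hK : 1 ≤ K) (hP : 1 ≤ P)
    (f f' : ℕ → Finset ℕ) (hf : IsValid K P f) (hf' : IsValid K P f')
    (p : ℕ) (hp : p < P) (hne : (f' p).Nonempty) :
    (RecvSet f f' p).Nonempty ∧
    sInf (RecvSet f f' p) =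
      (if (f' p).min' hne ∈ f p then p else sInf {q | (f' p).min' hne ∈ f q}) := by
  have hlt : ∀ k ∈ f' p, k < K := fun k hk => Finset.mem_range.mp (hf'.1.1 p hk)
  have hmin := (f' p).min'_mem hne
  have hleast : IsLeast (RecvSet f f' p) (sender f p ((f' p).min' hne)) := by
    refine ⟨⟨_, hmin, rfl⟩, ?_⟩
    rintro _ ⟨k, hk, rfl⟩
    rcases ((f' p).min'_le k hk).eq_or_lt with h | h
    · rw [h]
    · exact rank_le_of_tree_lt hf (mem_sender hf.1 p (hlt _ hmin))
        (mem_sender hf.1 p (hlt k hk)) h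
  exact ⟨hleast.nonempty, hleast.csInf_eq⟩
end

section
/- Every tree in the overlap of the adjusted ranges is sent from p̃ to q: let f (old) and f' (new) be valid partitions of the same K trees among the same P processes, let p̃ and q be processes, and let k̂_{p̃}, K̂_{p̃}, k̂_q, K̂_q be the adjusted indices defined in the context. Then every tree k with k̂_{p̃} ≤ k ≤ K̂_{p̃} and k̂_q ≤ k ≤ K̂_q satisfies k ∈ f'(q), and the sender of k to q is p̃. -/
/-!
The unadjusted ranges already force `k ∈ f pt` and `k ∈ f' q`: an empty set has extended
range `KExt = kExt - 1`, which contains no index, and a nonempty one is an interval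
(`mem_of_kExt_le_of_le_KExt`). If `pt = q`, the sender is `q` itself.

If `pt ≠ q`, a tree shared by processes `r < s` is both the last tree of `r` and the first
tree of `s` (`shared_eq`). Hence a holder `r < pt` of `k` makes `k` the first tree of `pt`,
which the adjustment of the lower end of the range of `pt` removes; so `pt` is the smallest
holder of `k`. And if `q` held `k`, then `q > pt` and `k` would be both the last tree of `pt`
and the first tree of `q`, which the adjustment of the upper end removes.
-/

open Classical

theorem kExt_eq_min' {f : ℕ → Finset ℕ} {p : ℕ} (h : (f p).Nonempty) :
    kExt f p = ((f p).min' h : ℤ) := by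
  simp only [kExt, dif_pos h]

theorem KExt_eq_max' {f : ℕ → Finset ℕ} {p : ℕ} (h : (f p).Nonempty) :
    KExt f p = ((f p).max' h : ℤ) := by
  simp only [KExt, dif_pos h]

theorem KExt_lt_kExt {f : ℕ → Finset ℕ} {p : ℕ} (h : ¬ (f p).Nonempty) :
    KExt f p < kExt f p := by
  simp only [KExt, kExt, dif_neg h]
  split_ifs <;> simp

theorem mem_of_kExt_le_of_le_KExt {K P : ℕ} {f : ℕ → Finset ℕ} (hf : IsValid K P f)
    {p k : ℕ} (h₁ : kExt f p ≤ (k : ℤ)) (h₂ : (k : ℤ) ≤ KExt f p) : k ∈ f p := by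
  have hne : (f p).Nonempty := by
    by_contra hne
    have := KExt_lt_kExt hne
    omega
  rw [kExt_eq_min' hne] at h₁
  rw [KExt_eq_max' hne] at h₂
  rw [hf.2.1 p hne, Finset.mem_Icc]
  omega

/-- A tree shared by two processes is the last tree of the smaller one and the first tree
of the larger one. -/
theorem shared_eq {K P : ℕ} {f : ℕ → Finset ℕ} (hf : IsValid K P f) {r s k : ℕ}
    (hrs : r < s) (hr : k ∈ f r) (hs : k ∈ f s) :
    KExt f r = (k : ℤ) ∧ kExt f s = (k : ℤ) := by
  have hle := hf.2.2.1 r s hrs ⟨k, hr⟩ ⟨k, hs⟩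
  have hmax := (f r).le_max' k hr
  have hmin := (f s).min'_le k hs
  rw [KExt_eq_max' ⟨k, hr⟩, kExt_eq_min' ⟨k, hs⟩]
  omega


/-- every tree in the overlap of the adjusted ranges is sent from
`p̃` to `q`. Let `f` (old) and `f'` (new) be valid partitions, let `p̃`, `q` be
processes and let `k̂_p̃, K̂_p̃, k̂_q, K̂_q` be the adjusted indices. Then every tree
`k` with `k̂_p̃ ≤ k ≤ K̂_p̃` and `k̂_q ≤ k ≤ K̂_q` satisfies `k ∈ f' q`, and the
sender of `k` to `q` is `p̃`. -/
theorem overlap_is_sent (K P : ℕ) (hK : 1 ≤ K) (hP : 1 ≤ P)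
    (f f' : ℕ → Finset ℕ) (hf : IsValid K P f) (hf' : IsValid K P f')
    (pt q : ℕ) (hpt : pt < P) (hq : q < P)
    (ka Ka kb Kb : ℤ)
    (hka : ka = if pt ≠ q ∧ ∃ r < pt, ∃ m ∈ f r, (m : ℤ) = kExt f pt
                then kExt f pt + 1 else kExt f pt)
    (hKa : Ka = if pt ≠ q ∧ KExt f pt = kExt f q
                then KExt f pt - 1 else KExt f pt)
    (hkb : kb = if pt ≠ q ∧ (f q).Nonempty ∧ kExt f q = kExt f' q
                then kExt f' q + 1 else kExt f' q)
    (hKb : Kb = KExt f' q) :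
    ∀ k : ℕ, ka ≤ (k : ℤ) → (k : ℤ) ≤ Ka → kb ≤ (k : ℤ) → (k : ℤ) ≤ Kb →
      k ∈ f' q ∧ sender f q k = pt := by
  intro k h₁ h₂ h₃ h₄
  have hka' : kExt f pt ≤ ka := by rw [hka]; split_ifs <;> omega
  have hKa' : Ka ≤ KExt f pt := by rw [hKa]; split_ifs <;> omega
  have hkb' : kExt f' q ≤ kb := by rw [hkb]; split_ifs <;> omega
  have hkpt : k ∈ f pt := mem_of_kExt_le_of_le_KExt hf (by omega) (by omega)
  refine ⟨mem_of_kExt_le_of_le_KExt hf' (by omega) (by omega), ?_⟩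
  by_cases hpq : pt = q
  · subst hpq
    simp only [sender, if_pos hkpt]
  have hmin : ∀ r, k ∈ f r → pt ≤ r := by
    intro r hr
    by_contra! hlt
    have hfirst := (shared_eq hf hlt hr hkpt).2
    rw [if_pos ⟨hpq, r, hlt, k, hr, hfirst.symm⟩] at hka
    omega
  have hkq : k ∉ f q := by
    intro hkq
    obtain ⟨hlast, hfirst⟩ := shared_eq hf (lt_of_le_of_ne (hmin q hkq) hpq) hkpt hkq
    rw [if_pos ⟨hpq, hlast.trans hfirst.symm⟩] at hKa
    omega
  simp only [sender, if_neg hkq]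
  exact le_antisymm (Nat.sInf_le hkpt) (le_csInf ⟨pt, hkpt⟩ hmin)
end

section
/- A shared tree is the last tree of its smallest owner and the first tree of its largest owner: let f be a valid partition and let tree k be shared, i.e. k ∈ f(p) ∩ f(q) for some p ≠ q. Let q₀ = min{ p | k ∈ f(p) } and q₁ = max{ p | k ∈ f(p) }. Then k = K_{q₀} (the largest tree index of q₀) and k = k_{q₁} (the smallest tree index of q₁). -/
/-!
The owners of `k` form a bounded set containing the distinct processes `p` and `q`, so its least
element `q₀` and its greatest element `q₁` are owners of `k` with `q₀ < q₁`. The ordering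
condition (ii) of a valid partition then gives `k ≤ K_{q₀} ≤ k_{q₁} ≤ k`, and equality holds
throughout.
-/

open Classical

/-- a shared tree is the last tree of its smallest owner and the
first tree of its largest owner. Let `f` be a valid partition and let tree `k` be
shared, i.e. `k ∈ f p ∩ f q` for some `p ≠ q`. Let `q₀ = min {p | k ∈ f p}` and
`q₁ = max {p | k ∈ f p}`. Then `k = K_{q₀}` and `k = k_{q₁}`. -/
theorem shared_tree_last_first (K P : ℕ) (hK : 1 ≤ K) (hP : 1 ≤ P)
    (f : ℕ → Finset ℕ) (hf : IsValid K P f)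
    (p q k : ℕ) (hp : p < P) (hq : q < P) (hpq : p ≠ q)
    (hk : k ∈ f p ∩ f q) :
    KExt f (sInf {r | k ∈ f r}) = (k : ℤ) ∧
    kExt f (sSup {r | k ∈ f r}) = (k : ℤ) := by
  obtain ⟨⟨-, hout, -⟩, -, hord, -⟩ := hf
  obtain ⟨hkp, hkq⟩ := Finset.mem_inter.mp hk
  set S : Set ℕ := {r | k ∈ f r} with hS
  have hpS : p ∈ S := hkp
  have hqS : q ∈ S := hkq
  -- Boundedness makes `sSup S` an attained maximum rather than the junk value `0`.
  have hbdd : BddAbove S := by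
    refine ⟨P, fun r (hr : k ∈ f r) => ?_⟩
    by_contra! hlt
    simp [hout r hlt.le] at hr
  have h₀ : k ∈ f (sInf S) := Nat.sInf_mem ⟨p, hpS⟩
  have h₁ : k ∈ f (sSup S) := Nat.sSup_mem ⟨p, hpS⟩ hbdd
  have hlt : sInf S < sSup S := by
    have := Nat.sInf_le hpS
    have := Nat.sInf_le hqS
    have := le_csSup hbdd hpS
    have := le_csSup hbdd hqS
    omega
  have hmid := hord _ _ hlt ⟨k, h₀⟩ ⟨k, h₁⟩
  have hmax := Finset.le_max' _ k h₀
  have hmin := Finset.min'_le _ k h₁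
  constructor
  · rw [KExt, dif_pos ⟨k, h₀⟩]
    exact_mod_cast (hmid.trans hmin).antisymm hmax
  · rw [kExt, dif_pos ⟨k, h₁⟩]
    exact_mod_cast hmin.antisymm (hmax.trans hmid)
end

section
/- Bound on the number of shared trees: in a valid partition of K trees among P processes, the number of trees that are shared, i.e. the cardinality of { k | k ∈ f(p) ∩ f(q) for some p ≠ q }, is at most P − 1. -/
/-!
If `k` lies in both `f p` and `f q` with `p < q`, then `k ≤ max (f p) ≤ min (f q) ≤ k`,
so `k = min (f q)` with `1 ≤ q < P`. Hence the shared trees are among the `P - 1` values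
`min (f q)`, `q ∈ {1, …, P - 1}`.
-/

open Classical

/-- bound on the number of shared trees.
In a valid partition of `K` trees among `P` processes, the number of shared trees,
i.e. the cardinality of `{k | k ∈ f p ∩ f q for some p ≠ q}`, is at most `P - 1`. -/
theorem card_shared_trees_le (K P : ℕ) (hK : 1 ≤ K) (hP : 1 ≤ P)
    (f : ℕ → Finset ℕ) (hf : IsValid K P f) :
    ((Finset.range K).filter fun k => ∃ p q, p ≠ q ∧ k ∈ f p ∧ k ∈ f q).card
      ≤ P - 1 := by
  -- `sInf` is a total version of `min'`; its junk value on empty sets only enlarges the image.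
  have hsub : ((Finset.range K).filter fun k => ∃ p q, p ≠ q ∧ k ∈ f p ∧ k ∈ f q) ⊆
      (Finset.Ico 1 P).image fun q => sInf (f q : Set ℕ) := by
    obtain ⟨⟨-, hempty, -⟩, -, hord, -⟩ := hf
    have key : ∀ k p q, p < q → k ∈ f p → k ∈ f q →
        k ∈ (Finset.Ico 1 P).image fun q => sInf (f q : Set ℕ) := by
      intro k p q hpq hkp hkq
      have hqP : q < P := by
        by_contra! h
        simp [hempty q h] at hkq
      refine Finset.mem_image.mpr ⟨q, Finset.mem_Ico.mpr ⟨by omega, hqP⟩, ?_⟩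
      have hne : (f q).Nonempty := ⟨k, hkq⟩
      have h1 := hord p q hpq ⟨k, hkp⟩ hne
      have h2 := (f p).le_max' k hkp
      have hmem : sInf (f q : Set ℕ) ∈ f q := Nat.sInf_mem (s := (f q : Set ℕ)) hne
      exact le_antisymm (Nat.sInf_le hkq) ((h2.trans h1).trans ((f q).min'_le _ hmem))
    intro k hk
    obtain ⟨-, p, q, hpq, hkp, hkq⟩ := Finset.mem_filter.mp hk
    rcases lt_or_gt_of_ne hpq with h | h
    · exact key k p q h hkp hkq
    · exact key k q p h hkq hkp
  calc _ ≤ _ := Finset.card_le_card hsub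
    _ ≤ (Finset.Ico 1 P).card := Finset.card_image_le
    _ = P - 1 := Nat.card_Ico 1 P
end
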